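/- Suppose b > 1, q ∈ ℂ with 0 < |q| ≤ 1 - 1/b, and x ∈ ℂ with |x| > 1. Then the infinite product R := Π_{m=1}^∞ (1 + q^{m-1}/x) satisfies |R| ≥ (1 - 1/|x|) · e^{(π²/6)(1-b)}. -/

import Mathlib

/-!
Put `z = 1 / x`. By the triangle inequality, `|1 + z * q ^ m|` is at least `1 - |z|` for `m = 0`
and at least `1 - |q| ^ m` for `m ≥ 1`. It remains to bound `∏ (1 - r ^ k)` over `k ≥ 1`
from below, for `r = |q|`. Expanding the logarithms and summing the geometric series in `k` gives
`∑ₖ -log (1 - r ^ k) = ∑ₙ (1 / n) * r ^ n / (1 - r ^ n)`. Since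
`1 - r ^ n = (1 - r) * (1 + r + ⋯ + r ^ (n - 1)) ≥ (1 - r) * n * r ^ (n - 1)`, the `n`-th term is at
most `r / (1 - r) / n ^ 2`, and these bounds add up to `r / (1 - r) * π ^ 2 / 6`.
Finally, `r ≤ 1 - 1 / b` says exactly that `r / (1 - r) ≤ b - 1`.
-/

open Finset

section Geometric

theorem add_one_mul_pow_mul_one_sub_le {R : Type*} [Ring R] [PartialOrder R] [IsOrderedRing R]
    {r : R} (hr₀ : 0 ≤ r) (hr₁ : r ≤ 1) (n : ℕ) :
    (n + 1) * r ^ n * (1 - r) ≤ 1 - r ^ (n + 1) := by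
  have smallest_term : (n + 1) * r ^ n ≤ ∑ k ∈ range (n + 1), r ^ k := by
    have := card_nsmul_le_sum (range (n + 1)) (r ^ ·) (r ^ n) fun k hk ↦
      pow_le_pow_of_le_one hr₀ hr₁ (mem_range_succ_iff.1 hk)
    simpa using this
  calc (n + 1) * r ^ n * (1 - r)
      ≤ (∑ k ∈ range (n + 1), r ^ k) * (1 - r) :=
        mul_le_mul_of_nonneg_right smallest_term (sub_nonneg.2 hr₁)
    _ = 1 - r ^ (n + 1) := geom_sum_mul_neg r (n + 1)

variable {K : Type*} [Field K] [LinearOrder K] [IsStrictOrderedRing K] {r : K}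

theorem pow_div_one_sub_pow_le (hr₀ : 0 ≤ r) (hr₁ : r < 1) (n : ℕ) :
    r ^ (n + 1) / (1 - r ^ (n + 1)) ≤ r / (1 - r) / (n + 1) := by
  have hpow : r ^ (n + 1) < 1 := pow_lt_one₀ hr₀ hr₁ n.succ_ne_zero
  rw [div_div, div_le_div_iff₀ (sub_pos.2 hpow) (mul_pos (sub_pos.2 hr₁) n.cast_add_one_pos)]
  calc r ^ (n + 1) * ((1 - r) * (n + 1))
      = r * ((n + 1) * r ^ n * (1 - r)) := by ring
    _ ≤ r * (1 - r ^ (n + 1)) :=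
        mul_le_mul_of_nonneg_left (add_one_mul_pow_mul_one_sub_le hr₀ hr₁.le n) hr₀

theorem sum_range_pow_succ_le (hr₀ : 0 ≤ r) (hr₁ : r < 1) (N : ℕ) :
    ∑ k ∈ range N, r ^ (k + 1) ≤ r / (1 - r) := by
  have := geom_sum_Ico_le_of_lt_one (m := 1) (n := N + 1) hr₀ hr₁
  rwa [pow_one, ← sum_Ico_add' (r ^ ·) 0 N 1, ← range_eq_Ico] at this

theorem sum_range_pow_pow_div_le (hr₀ : 0 ≤ r) (hr₁ : r < 1) (n N : ℕ) :
    ∑ k ∈ range N, (r ^ (k + 1)) ^ (n + 1) / (n + 1) ≤ r / (1 - r) * (1 / (n + 1) ^ 2) := by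
  have hn : (0 : K) ≤ n + 1 := n.cast_add_one_pos.le
  calc ∑ k ∈ range N, (r ^ (k + 1)) ^ (n + 1) / (n + 1)
      = (∑ k ∈ range N, (r ^ (n + 1)) ^ (k + 1)) / (n + 1) := by
        simp only [sum_div, pow_right_comm r]
    _ ≤ r ^ (n + 1) / (1 - r ^ (n + 1)) / (n + 1) :=
        div_le_div_of_nonneg_right
          (sum_range_pow_succ_le (pow_nonneg hr₀ _) (pow_lt_one₀ hr₀ hr₁ n.succ_ne_zero) N) hn
    _ ≤ r / (1 - r) / (n + 1) / (n + 1) :=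
        div_le_div_of_nonneg_right (pow_div_one_sub_pow_le hr₀ hr₁ n) hn
    _ = r / (1 - r) * (1 / (n + 1) ^ 2) := by rw [div_div, ← sq, mul_one_div]

theorem div_one_sub_le_sub_one {b : K} (hb : 0 < b) (hr : r ≤ 1 - 1 / b) :
    r / (1 - r) ≤ b - 1 := by
  have hrb : 1 / b ≤ 1 - r := le_sub_comm.1 hr
  have hr₁ : 0 < 1 - r := (one_div_pos.2 hb).trans_le hrb
  rw [div_le_iff₀ hr₁]
  linarith [(div_le_iff₀' hb).1 hrb]

end Geometric

section EulerProduct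

theorem hasSum_one_div_add_one_sq :
    HasSum (fun n : ℕ ↦ 1 / ((n : ℝ) + 1) ^ 2) (Real.pi ^ 2 / 6) := by
  simpa using (hasSum_nat_add_iff' 1).2 hasSum_zeta_two

variable {r : ℝ}

theorem sum_range_neg_log_one_sub_pow_le (hr₀ : 0 ≤ r) (hr₁ : r < 1) (N : ℕ) :
    ∑ k ∈ range N, -Real.log (1 - r ^ (k + 1)) ≤ r / (1 - r) * (Real.pi ^ 2 / 6) := by
  have hlog : HasSum (fun n : ℕ ↦ ∑ k ∈ range N, (r ^ (k + 1)) ^ (n + 1) / ((n : ℝ) + 1))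
      (∑ k ∈ range N, -Real.log (1 - r ^ (k + 1))) :=
    hasSum_sum fun k _ ↦ Real.hasSum_pow_div_log_of_abs_lt_one <| by
      rw [abs_of_nonneg (pow_nonneg hr₀ _)]
      exact pow_lt_one₀ hr₀ hr₁ k.succ_ne_zero
  exact hasSum_le (fun n ↦ sum_range_pow_pow_div_le hr₀ hr₁ n N) hlog
    (hasSum_one_div_add_one_sq.mul_left _)

theorem exp_neg_le_prod_range_one_sub_pow (hr₀ : 0 ≤ r) (hr₁ : r < 1) (N : ℕ) :
    Real.exp (-(r / (1 - r) * (Real.pi ^ 2 / 6))) ≤ ∏ k ∈ range N, (1 - r ^ (k + 1)) := by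
  have hpos (k : ℕ) : 0 < 1 - r ^ (k + 1) := sub_pos.2 (pow_lt_one₀ hr₀ hr₁ k.succ_ne_zero)
  rw [← Real.le_log_iff_exp_le (prod_pos fun k _ ↦ hpos k),
    Real.log_prod fun k _ ↦ (hpos k).ne', neg_le, ← sum_neg_distrib]
  exact sum_range_neg_log_one_sub_pow_le hr₀ hr₁ N

end EulerProduct

section NormedRing

theorem one_sub_norm_le_norm_one_add {A : Type*} [SeminormedRing A] [NormOneClass A] (a : A) :
    1 - ‖a‖ ≤ ‖1 + a‖ := by
  simpa using norm_sub_le_norm_add 1 a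

theorem multipliable_one_add_mul_pow {A : Type*} [NormedCommRing A] [NormOneClass A]
    [CompleteSpace A] {q : A} (hq : ‖q‖ < 1) (z : A) :
    Multipliable fun m : ℕ ↦ 1 + z * q ^ m :=
  multipliable_one_add_of_summable <|
    .of_nonneg_of_le (fun _ ↦ norm_nonneg _)
      (fun m ↦ (norm_mul_le _ _).trans <| mul_le_mul_of_nonneg_left (norm_pow_le q m)
        (norm_nonneg z))
      ((summable_geometric_of_lt_one (norm_nonneg q) hq).mul_left ‖z‖)

theorem one_sub_norm_mul_prod_le_norm_prod_one_add_mul_pow {A : Type*} [SeminormedCommRing A]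
    [NormOneClass A] [NormMulClass A] {q z : A} (hq : ‖q‖ ≤ 1) (hz : ‖z‖ ≤ 1) (N : ℕ) :
    (1 - ‖z‖) * ∏ k ∈ range N, (1 - ‖q‖ ^ (k + 1)) ≤ ‖∏ m ∈ range (N + 1), (1 + z * q ^ m)‖ := by
  have hfactor (k : ℕ) : 1 - ‖q‖ ^ (k + 1) ≤ ‖1 + z * q ^ (k + 1)‖ :=
    calc 1 - ‖q‖ ^ (k + 1)
        ≤ 1 - ‖z * q ^ (k + 1)‖ := by
          rw [norm_mul, norm_pow]
          exact sub_le_sub_left (mul_le_of_le_one_left (by positivity) hz) 1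
      _ ≤ ‖1 + z * q ^ (k + 1)‖ := one_sub_norm_le_norm_one_add _
  have hnonneg (k : ℕ) : 0 ≤ 1 - ‖q‖ ^ (k + 1) :=
    sub_nonneg.2 (pow_le_one₀ (norm_nonneg q) hq)
  rw [norm_prod, prod_range_succ', pow_zero, mul_one, mul_comm]
  exact mul_le_mul (prod_le_prod (fun k _ ↦ hnonneg k) fun k _ ↦ hfactor k)
    (one_sub_norm_le_norm_one_add z) (sub_nonneg.2 hz) (prod_nonneg fun k _ ↦ norm_nonneg _)

variable {A : Type*} [NormedCommRing A] [NormOneClass A] [NormMulClass A] [CompleteSpace A]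

theorem one_sub_norm_mul_exp_le_norm_tprod_one_add_mul_pow {q z : A} (hq : ‖q‖ < 1)
    (hz : ‖z‖ ≤ 1) :
    (1 - ‖z‖) * Real.exp (-(‖q‖ / (1 - ‖q‖) * (Real.pi ^ 2 / 6)))
      ≤ ‖∏' m : ℕ, (1 + z * q ^ m)‖ := by
  have htendsto := ((multipliable_one_add_mul_pow hq z).hasProd.tendsto_prod_nat.comp
    (Filter.tendsto_add_atTop_nat 1)).norm
  refine ge_of_tendsto' htendsto fun N ↦ ?_
  calc (1 - ‖z‖) * Real.exp (-(‖q‖ / (1 - ‖q‖) * (Real.pi ^ 2 / 6)))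
      ≤ (1 - ‖z‖) * ∏ k ∈ range N, (1 - ‖q‖ ^ (k + 1)) :=
        mul_le_mul_of_nonneg_left (exp_neg_le_prod_range_one_sub_pow (norm_nonneg q) hq N)
          (sub_nonneg.2 hz)
    _ ≤ ‖∏ m ∈ range (N + 1), (1 + z * q ^ m)‖ :=
        one_sub_norm_mul_prod_le_norm_prod_one_add_mul_pow hq.le hz N

theorem R_lower_bound_general {b : ℝ} (hb : 0 < b) {q : A} (hq : ‖q‖ ≤ 1 - 1 / b) (z : A) :
    (1 - ‖z‖) * Real.exp ((Real.pi ^ 2 / 6) * (1 - b)) ≤ ‖∏' m : ℕ, (1 + z * q ^ m)‖ := by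
  obtain hz | hz := le_total 1 ‖z‖
  · exact (mul_nonpos_of_nonpos_of_nonneg (sub_nonpos.2 hz) (Real.exp_nonneg _)).trans
      (norm_nonneg _)
  have hq₁ : ‖q‖ < 1 := hq.trans_lt (sub_lt_self 1 (one_div_pos.2 hb))
  have hexponent : Real.pi ^ 2 / 6 * (1 - b) ≤ -(‖q‖ / (1 - ‖q‖) * (Real.pi ^ 2 / 6)) := by
    have := mul_le_mul_of_nonneg_right (div_one_sub_le_sub_one hb hq)
      (by positivity : 0 ≤ Real.pi ^ 2 / 6)
    linarith
  calc (1 - ‖z‖) * Real.exp (Real.pi ^ 2 / 6 * (1 - b))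
      ≤ (1 - ‖z‖) * Real.exp (-(‖q‖ / (1 - ‖q‖) * (Real.pi ^ 2 / 6))) :=
        mul_le_mul_of_nonneg_left (Real.exp_le_exp.2 hexponent) (sub_nonneg.2 hz)
    _ ≤ ‖∏' m : ℕ, (1 + z * q ^ m)‖ :=
        one_sub_norm_mul_exp_le_norm_tprod_one_add_mul_pow hq₁ hz

end NormedRing

/-- For `b > 1`, `0 < |q| ≤ 1 - 1/b` and `|x| > 1`, the product
`R = ∏_{m=1}^∞ (1 + q^{m-1}/x)` satisfies `|R| ≥ (1 - 1/|x|) e^{(π²/6)(1-b)}`. -/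
theorem R_lower_bound (b : ℝ) (hb : 1 < b) (q : ℂ) (hq0 : 0 < ‖q‖) (hq : ‖q‖ ≤ 1 - 1 / b)
    (x : ℂ) (hx : 1 < ‖x‖) :
    (1 - 1 / ‖x‖) * Real.exp ((Real.pi ^ 2 / 6) * (1 - b))
      ≤ ‖∏' m : ℕ, (1 + q ^ m / x)‖ := by
  simpa [div_eq_inv_mul] using R_lower_bound_general (one_pos.trans hb) hq x⁻¹
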